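/- CPO trust-region safety guarantee: suppose π_{k+1} satisfies the surrogate cost constraint J_C(π_k) + (1/(1−γ)) E_{s∼d^{π_k}, a∼π_{k+1}}[A_C^{π_k}(s,a)] ≤ d and the trust region Ē_{s∼d^{π_k}}[D_KL(π_{k+1}(·|s) ‖ π_k(·|s))] ≤ δ. Then J_C(π_{k+1}) ≤ d + √(2δ) γ ε_C^{π_{k+1}} / (1−γ)², where ε_C^{π_{k+1}} = max_s |E_{a∼π_{k+1}}[A_C^{π_k}(s,a)]|. -/

import Mathlib

open scoped BigOperators

lemma aux_log (x : ℝ) (hx : 0 < x) :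
    0 ≤ Real.log x - 5/2 + 1/4 * x⁻¹ + 27/4 * (x+2)⁻¹ := by
  set h : ℝ → ℝ := fun x => Real.log x - 5/2 + 1/4 * x⁻¹ + 27/4 * (x+2)⁻¹ with hh
  have hder : ∀ y, 0 < y → HasDerivAt h ((y-1)^3 / (y^2*(y+2)^2)) y := by
    intro y hy
    have h1 := (((Real.hasDerivAt_log hy.ne').sub_const (5/2)).add
      ((hasDerivAt_inv hy.ne').const_mul (1/4))).add
      ((((hasDerivAt_id y).add_const 2).inv (by simp; positivity)).const_mul (27/4))
    refine h1.congr_deriv ?_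
    simp only [id]
    field_simp
    ring
  have h1 : h 1 = 0 := by simp [hh]; norm_num
  show 0 ≤ h x
  rw [← h1]
  rcases le_total x 1 with hx1 | hx1
  · have : AntitoneOn h (Set.Icc x 1) := by
      refine antitoneOn_of_hasDerivWithinAt_nonpos (convex_Icc _ _)
        (f' := fun y => (y-1)^3 / (y^2*(y+2)^2)) ?_ ?_ ?_
      · intro y hy
        exact (hder y (lt_of_lt_of_le hx hy.1)).continuousAt.continuousWithinAt
      · intro y hy
        rw [interior_Icc] at hy
        exact (hder y (hx.trans hy.1)).hasDerivWithinAt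
      · intro y hy
        rw [interior_Icc] at hy
        refine div_nonpos_of_nonpos_of_nonneg ?_ (by positivity)
        exact Odd.pow_nonpos (by decide) (by linarith [hy.2])
    exact this ⟨le_rfl, hx1⟩ ⟨hx1, le_rfl⟩ hx1
  · have : MonotoneOn h (Set.Icc 1 x) := by
      refine monotoneOn_of_hasDerivWithinAt_nonneg (convex_Icc _ _)
        (f' := fun y => (y-1)^3 / (y^2*(y+2)^2)) ?_ ?_ ?_
      · intro y hy
        exact (hder y (lt_of_lt_of_le one_pos hy.1)).continuousAt.continuousWithinAt
      · intro y hy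
        rw [interior_Icc] at hy
        exact (hder y (one_pos.trans hy.1)).hasDerivWithinAt
      · intro y hy
        rw [interior_Icc] at hy
        refine div_nonneg ?_ (by positivity)
        exact pow_nonneg (by linarith [hy.1]) _
    exact this ⟨le_rfl, hx1⟩ ⟨hx1, le_rfl⟩ hx1

lemma aux_pt (p q : ℝ) (hp : 0 ≤ p) (hq : 0 ≤ q) (h0 : q = 0 → p = 0) :
    (p - q)^2 ≤ ((2*p+4*q)/3) * (p * Real.log (p/q) - p + q) ∧
      0 ≤ p * Real.log (p/q) - p + q := by
  rcases hq.eq_or_lt with h | h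
  · have := h0 h.symm
    subst this; subst h; simp
  rcases hp.eq_or_lt with h' | h'
  · subst h'
    simp only [zero_mul]
    constructor <;> nlinarith
  have key := aux_log (p/q) (by positivity)
  have e : Real.log (p/q) - 5/2 + 1/4 * (p/q)⁻¹ + 27/4 * (p/q+2)⁻¹
    = Real.log (p/q) - (p-q)*(5*p+q)/(2*p*(p+2*q)) := by
    field_simp
    ring
  rw [e] at key
  have k2 : (p-q)^2 ≤ ((2*p+4*q)/3) * (p * Real.log (p/q) - p + q) := by
    have : ((2*p+4*q)/3) * (p * Real.log (p/q) - p + q) - (p-q)^2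
      = ((2*p+4*q)/3) * p * (Real.log (p/q) - (p-q)*(5*p+q)/(2*p*(p+2*q))) := by
      field_simp
      ring
    have : 0 ≤ ((2*p+4*q)/3) * (p * Real.log (p/q) - p + q) - (p-q)^2 := by
      rw [this]; positivity
    linarith
  refine ⟨k2, ?_⟩
  by_contra hn
  push Not at hn
  nlinarith [sq_nonneg (p-q), mul_neg_of_pos_of_neg (show 0 < (2*p+4*q)/3 by positivity) hn]

lemma aux_pinsker {A : Type*} [Fintype A] (p q : A → ℝ) (hp : ∀ a, 0 ≤ p a)
    (hq : ∀ a, 0 ≤ q a) (hp1 : ∑ a, p a = 1) (hq1 : ∑ a, q a = 1)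
    (h0 : ∀ a, q a = 0 → p a = 0) :
    (∑ a, |p a - q a|)^2 ≤ 2 * ∑ a, p a * Real.log (p a / q a) := by
  have := Finset.sum_sq_le_sum_mul_sum_of_sq_le_mul Finset.univ
    (r := fun a => |p a - q a|) (f := fun a => (2*p a+4*q a)/3)
    (g := fun a => p a * Real.log (p a / q a) - p a + q a)
    (fun a _ => by have := hp a; have := hq a; positivity)
    (fun a _ => (aux_pt _ _ (hp a) (hq a) (h0 a)).2)
    (fun a _ => by
      rw [sq_abs]; exact (aux_pt _ _ (hp a) (hq a) (h0 a)).1)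
  rw [← Finset.sum_div, Finset.sum_add_distrib, ← Finset.mul_sum, ← Finset.mul_sum,
    Finset.sum_add_distrib, Finset.sum_sub_distrib, hp1, hq1] at this
  linarith

/-- CPO trust-region safety guarantee: if the new policy satisfies the surrogate cost
constraint and an average-KL trust region of radius δ, then its cost return exceeds the
threshold by at most √(2δ) γ ε_C / (1−γ)². -/
theorem cpo_trust_region_safety
    {S A : Type*} [Fintype S] [Fintype A] [Nonempty S]
    (γ : ℝ) (hγ0 : 0 ≤ γ) (hγ1 : γ < 1)
    (P : S → A → S → ℝ) (hPnn : ∀ s a s', 0 ≤ P s a s')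
    (hP1 : ∀ s a, ∑ s', P s a s' = 1)
    (C : S → A → ℝ) (ρ : S → ℝ) (hρnn : ∀ s, 0 ≤ ρ s) (hρ1 : ∑ s, ρ s = 1)
    (πk πk1 : S → A → ℝ)
    (hπknn : ∀ s a, 0 ≤ πk s a) (hπk1 : ∀ s, ∑ a, πk s a = 1)
    (hπk1nn : ∀ s a, 0 ≤ πk1 s a) (hπk11 : ∀ s, ∑ a, πk1 s a = 1)
    (hac : ∀ s a, πk s a = 0 → πk1 s a = 0)
    (VC VC' : S → ℝ)
    (hVC : ∀ s, VC s = ∑ a, πk s a * (C s a + γ * ∑ s', P s a s' * VC s'))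
    (hVC' : ∀ s, VC' s = ∑ a, πk1 s a * (C s a + γ * ∑ s', P s a s' * VC' s'))
    (AdvC : S → A → ℝ)
    (hAC : ∀ s a, AdvC s a = (C s a + γ * ∑ s', P s a s' * VC s') - VC s)
    (dvis : S → ℝ)
    (hd : ∀ s, dvis s = (1 - γ) * ρ s + γ * ∑ s'', ∑ a, dvis s'' * πk s'' a * P s'' a s)
    (JC JC' : ℝ) (hJC : JC = ∑ s, ρ s * VC s) (hJC' : JC' = ∑ s, ρ s * VC' s)
    (εC : ℝ) (hεC : εC = ⨆ s, |∑ a, πk1 s a * AdvC s a|)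
    (d δ : ℝ) (hδ : 0 ≤ δ)
    (hsurr : JC + (1 / (1 - γ)) * ∑ s, dvis s * ∑ a, πk1 s a * AdvC s a ≤ d)
    (hKL : ∑ s, dvis s * ∑ a, πk1 s a * Real.log (πk1 s a / πk s a) ≤ δ) :
    JC' ≤ d + Real.sqrt (2 * δ) * γ * εC / (1 - γ) ^ 2 := by
  have hg1 : 0 < 1 - γ := by linarith
  -- visitation distribution: total mass one, nonnegative
  have flow : ∀ f : S → ℝ, ∑ s, (∑ s'', ∑ a, dvis s'' * πk s'' a * P s'' a s) * f s
      = ∑ s, dvis s * ∑ a, πk s a * ∑ s', P s a s' * f s' := by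
    intro f
    simp only [Finset.sum_mul, Finset.mul_sum]
    rw [Finset.sum_comm]
    refine Finset.sum_congr rfl fun s _ => ?_
    rw [Finset.sum_comm]
    refine Finset.sum_congr rfl fun a _ => Finset.sum_congr rfl fun s' _ => ?_
    ring
  have hdsum : ∑ s, dvis s = 1 := by
    have h1 := flow (fun _ => 1)
    simp only [mul_one, hP1, hπk1] at h1
    have h2 : ∑ s, dvis s = (1 - γ) * ∑ s, ρ s
        + γ * ∑ s, ∑ s'', ∑ a, dvis s'' * πk s'' a * P s'' a s := by
      rw [Finset.mul_sum, Finset.mul_sum, ← Finset.sum_add_distrib]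
      exact Finset.sum_congr rfl fun s _ => hd s
    rw [h1, hρ1] at h2
    have : (1 - γ) * (∑ s, dvis s - 1) = 0 := by linarith
    rcases mul_eq_zero.1 this with h | h <;> linarith
  have hdnn : ∀ s, 0 ≤ dvis s := by
    set n : S → ℝ := fun s => max (-dvis s) 0 with hn
    have hnn : ∀ s, 0 ≤ n s := fun s => le_max_right _ _
    have hnd : ∀ s, -dvis s ≤ n s := fun s => le_max_left _ _
    have hb : ∀ s, n s ≤ γ * ∑ s'', ∑ a, n s'' * πk s'' a * P s'' a s := by
      intro s
      refine max_le ?_ ?_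
      · have h1 : -∑ s'', ∑ a, dvis s'' * πk s'' a * P s'' a s
            ≤ ∑ s'', ∑ a, n s'' * πk s'' a * P s'' a s := by
          rw [← Finset.sum_neg_distrib]
          refine Finset.sum_le_sum fun s'' _ => ?_
          rw [← Finset.sum_neg_distrib]
          refine Finset.sum_le_sum fun a _ => ?_
          have := mul_le_mul_of_nonneg_right (hnd s'')
            (mul_nonneg (hπknn s'' a) (hPnn s'' a s))
          linarith
        have h2 := mul_le_mul_of_nonneg_left h1 hγ0
        have h3 := mul_nonneg hg1.le (hρnn s)
        have h4 := hd s
        linarith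
      · refine mul_nonneg hγ0 (Finset.sum_nonneg fun s'' _ => Finset.sum_nonneg fun a _ => ?_)
        exact mul_nonneg (mul_nonneg (hnn _) (hπknn _ _)) (hPnn _ _ _)
    have hs : ∑ s, n s ≤ γ * ∑ s, n s := by
      have e : ∑ s, ∑ s'', ∑ a, n s'' * πk s'' a * P s'' a s = ∑ s, n s := by
        rw [Finset.sum_comm]
        refine Finset.sum_congr rfl fun s _ => ?_
        rw [Finset.sum_comm]
        simp only [← Finset.mul_sum, hP1, mul_one, hπk1]
      calc ∑ s, n s ≤ ∑ s, γ * ∑ s'', ∑ a, n s'' * πk s'' a * P s'' a s :=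
            Finset.sum_le_sum fun s _ => hb s
        _ = _ := by rw [← Finset.mul_sum, e]
    intro s
    have h1 : n s ≤ ∑ s, n s := Finset.single_le_sum (fun s _ => hnn s) (Finset.mem_univ s)
    have h2 : ∑ s, n s ≤ 0 := by
      by_contra hc
      push Not at hc
      nlinarith
    have := hnd s
    linarith
  -- value difference
  set W : S → ℝ := fun s => VC' s - VC s with hW
  set g : S → ℝ := fun s => ∑ a, πk1 s a * AdvC s a with hg
  set B : S → A → ℝ := fun s a => ∑ s', P s a s' * W s' with hB
  have hWeq : ∀ s, W s = g s + γ * ∑ a, πk1 s a * B s a := by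
    intro s
    have e1 : g s = ∑ a, πk1 s a * (C s a + γ * ∑ s', P s a s' * VC s') - VC s := by
      simp only [hg, hAC, mul_sub, Finset.sum_sub_distrib, ← Finset.sum_mul, hπk11, one_mul]
    have e2 : ∀ a, B s a = ∑ s', P s a s' * VC' s' - ∑ s', P s a s' * VC s' := by
      intro a
      simp only [hB, hW, mul_sub, Finset.sum_sub_distrib]
    have e3 : W s = VC' s - VC s := rfl
    rw [e3, e1, hVC' s, Finset.mul_sum, sub_add_eq_add_sub, ← Finset.sum_add_distrib]
    congr 1
    refine Finset.sum_congr rfl fun a _ => ?_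
    rw [e2]; ring
  have hgε : ∀ s, |g s| ≤ εC := by
    intro s
    rw [hεC]
    exact le_ciSup (f := fun s => |g s|) (Set.finite_range _).bddAbove s
  obtain ⟨s0, hs0⟩ := Finite.exists_max (fun s => |W s|)
  have hBb : ∀ s a, |B s a| ≤ |W s0| := by
    intro s a
    calc |B s a| ≤ ∑ s', |P s a s' * W s'| := Finset.abs_sum_le_sum_abs _ _
      _ ≤ ∑ s', P s a s' * |W s0| := Finset.sum_le_sum fun s' _ => by
          rw [abs_mul, abs_of_nonneg (hPnn _ _ _)]
          exact mul_le_mul_of_nonneg_left (hs0 s') (hPnn _ _ _)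
      _ = |W s0| := by rw [← Finset.sum_mul, hP1, one_mul]
  have hM : (1 - γ) * |W s0| ≤ εC := by
    have h1 : |∑ a, πk1 s0 a * B s0 a| ≤ |W s0| := by
      calc |∑ a, πk1 s0 a * B s0 a| ≤ ∑ a, |πk1 s0 a * B s0 a| :=
            Finset.abs_sum_le_sum_abs _ _
        _ ≤ ∑ a, πk1 s0 a * |W s0| := Finset.sum_le_sum fun a _ => by
            rw [abs_mul, abs_of_nonneg (hπk1nn _ _)]
            exact mul_le_mul_of_nonneg_left (hBb s0 a) (hπk1nn _ _)
        _ = |W s0| := by rw [← Finset.sum_mul, hπk11, one_mul]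
    have h2 : |W s0| ≤ |g s0| + γ * |∑ a, πk1 s0 a * B s0 a| := by
      conv_lhs => rw [hWeq s0]
      refine (abs_add_le _ _).trans ?_
      rw [abs_mul, abs_of_nonneg hγ0]
    have h3 := mul_le_mul_of_nonneg_left h1 hγ0
    have := hgε s0
    linarith
  set T : S → ℝ := fun s => ∑ a, |πk1 s a - πk s a| with hT
  have hT2 : ∀ s, T s ^ 2 ≤ 2 * ∑ a, πk1 s a * Real.log (πk1 s a / πk s a) := fun s =>
    aux_pinsker _ _ (hπk1nn s) (hπknn s) (hπk11 s) (hπk1 s) (hac s)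
  have hdT : ∑ s, dvis s * T s ≤ Real.sqrt (2 * δ) := by
    refine Real.le_sqrt_of_sq_le ?_
    have h1 := Finset.sum_sq_le_sum_mul_sum_of_sq_le_mul Finset.univ
      (r := fun s => dvis s * T s) (f := dvis) (g := fun s => dvis s * T s ^ 2)
      (fun s _ => hdnn s) (fun s _ => mul_nonneg (hdnn s) (sq_nonneg _))
      (fun s _ => le_of_eq (by ring))
    rw [hdsum, one_mul] at h1
    refine h1.trans ?_
    calc ∑ s, dvis s * T s ^ 2
        ≤ ∑ s, 2 * (dvis s * ∑ a, πk1 s a * Real.log (πk1 s a / πk s a)) :=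
          Finset.sum_le_sum fun s _ => by
            have := mul_le_mul_of_nonneg_left (hT2 s) (hdnn s)
            linarith
      _ ≤ 2 * δ := by rw [← Finset.mul_sum]; linarith
  have hdiff : ∀ s, ∑ a, πk1 s a * B s a - ∑ a, πk s a * B s a ≤ T s * |W s0| := by
    intro s
    rw [← Finset.sum_sub_distrib, hT, Finset.sum_mul]
    refine Finset.sum_le_sum fun a _ => ?_
    rw [← sub_mul]
    refine (le_abs_self _).trans ?_
    rw [abs_mul]
    exact mul_le_mul_of_nonneg_left (hBb s a) (abs_nonneg _)
  have hmain : (1 - γ) * ∑ s, ρ s * W s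
      = ∑ s, dvis s * W s - γ * ∑ s, dvis s * ∑ a, πk s a * B s a := by
    rw [← flow W, Finset.mul_sum, Finset.mul_sum, ← Finset.sum_sub_distrib]
    refine Finset.sum_congr rfl fun s _ => ?_
    have := hd s
    linear_combination (-W s) * this
  have hup : (1 - γ) * ∑ s, ρ s * W s
      ≤ ∑ s, dvis s * g s + γ * |W s0| * Real.sqrt (2 * δ) := by
    calc (1 - γ) * ∑ s, ρ s * W s
        ≤ ∑ s, (dvis s * g s + γ * |W s0| * (dvis s * T s)) := by
          rw [hmain, Finset.mul_sum, ← Finset.sum_sub_distrib]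
          refine Finset.sum_le_sum fun s _ => ?_
          have h1 := mul_le_mul_of_nonneg_left (hdiff s) (mul_nonneg hγ0 (hdnn s))
          rw [hWeq s]
          linarith
      _ = ∑ s, dvis s * g s + γ * |W s0| * ∑ s, dvis s * T s := by
          rw [Finset.sum_add_distrib, Finset.mul_sum]
      _ ≤ _ := by
          have := mul_le_mul_of_nonneg_left hdT (mul_nonneg hγ0 (abs_nonneg (W s0)))
          linarith
  have hJ : JC' - JC = ∑ s, ρ s * W s := by
    simp only [hJC, hJC', hW, mul_sub, Finset.sum_sub_distrib]
  rw [← hJ] at hup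
  have hM' : |W s0| ≤ εC / (1 - γ) := by rw [le_div_iff₀ hg1]; linarith
  have h5 : γ * |W s0| * Real.sqrt (2 * δ) ≤ γ * (εC / (1 - γ)) * Real.sqrt (2 * δ) := by
    gcongr
  have h6 : JC' - JC ≤ (∑ s, dvis s * g s + γ * (εC / (1 - γ)) * Real.sqrt (2 * δ)) / (1 - γ) := by
    rw [le_div_iff₀ hg1]; linarith
  have h7 : (∑ s, dvis s * g s + γ * (εC / (1 - γ)) * Real.sqrt (2 * δ)) / (1 - γ)
      = (1 / (1 - γ)) * ∑ s, dvis s * g s + Real.sqrt (2 * δ) * γ * εC / (1 - γ) ^ 2 := by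
    field_simp
  linarith
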